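/- For every p : ℕ → ℕ, the series defining g converges for every x ∈ ℝ, the function g is infinitely differentiable, and g is a Schwartz function: for all d, m ∈ ℕ there is a constant C such that |x|^d · |g⁽ᵐ⁾(x)| ≤ C for all x ∈ ℝ. -/

import Mathlib

/-- The standard bump function `f(x) = exp(x²/(x²−1))` for `|x| < 1`, and `0` otherwise. -/
noncomputable def bump (x : ℝ) : ℝ :=
  if |x| < 1 then Real.exp (x ^ 2 / (x ^ 2 - 1)) else 0

/-- The coefficients `cᵢ = 2^(−(i+1)) · (2p(i)+1)^(−i) · (17i)^(−4i)`
(with the conventions `(2p(0)+1)⁰ = 1` and `(17·0)⁰ = 1`, so `c₀ = 1/2`). -/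
noncomputable def coeffc (p : ℕ → ℕ) (i : ℕ) : ℝ :=
  (2 : ℝ) ^ (-((i : ℤ) + 1)) * ((2 * (p i : ℝ) + 1) ^ (-(i : ℤ))) *
    ((17 * (i : ℝ)) ^ (-(4 * (i : ℤ))))

/-- `g(x) = Σᵢ cᵢ f(x − 2p(i))`. -/
noncomputable def gfun (p : ℕ → ℕ) (x : ℝ) : ℝ :=
  ∑' i : ℕ, coeffc p i * bump (x - 2 * (p i : ℝ))

theorem bump_eq : bump = fun x => Real.exp 1 * expNegInvGlue (1 - x ^ 2) := by
  funext x
  unfold bump expNegInvGlue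
  by_cases h : |x| < 1
  · have h2 : x ^ 2 < 1 := by rw [← sq_abs]; nlinarith [abs_nonneg x]
    have h3 : ¬ (1 - x ^ 2 ≤ 0) := by linarith
    rw [if_pos h, if_neg h3, ← Real.exp_add]
    congr 1
    have h4 : x ^ 2 - 1 ≠ 0 := by linarith
    have h5 : 1 - x ^ 2 ≠ 0 := by linarith
    field_simp
    ring
  · have h2 : 1 ≤ x ^ 2 := by rw [← sq_abs]; nlinarith [abs_nonneg x]
    have h3 : (1 - x ^ 2 ≤ 0) := by linarith
    rw [if_neg h, if_pos h3, mul_zero]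

theorem bump_contDiff : ContDiff ℝ (⊤ : ℕ∞) bump := by
  rw [bump_eq]
  exact contDiff_const.mul (expNegInvGlue.contDiff.comp (contDiff_const.sub (contDiff_id.pow 2)))

theorem bump_tsupport : tsupport bump ⊆ Metric.closedBall 0 1 := by
  refine closure_minimal ?_ Metric.isClosed_closedBall
  intro x hx
  by_contra h
  apply hx
  unfold bump
  rw [if_neg]
  intro h'
  apply h
  simp only [Metric.mem_closedBall, dist_zero_right, Real.norm_eq_abs]
  exact h'.le

theorem bump_compact : HasCompactSupport bump :=
  HasCompactSupport.of_support_subset_isCompact (isCompact_closedBall 0 1)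
    (subset_closure.trans bump_tsupport)

theorem bump_bound (m : ℕ) : ∃ B : ℝ, 0 ≤ B ∧ ∀ x, ‖iteratedFDeriv ℝ m bump x‖ ≤ B := by
  obtain ⟨B, hB⟩ := (bump_compact.iteratedFDeriv (𝕜 := ℝ) m).exists_bound_of_continuous
    (bump_contDiff.continuous_iteratedFDeriv (by exact_mod_cast le_top))
  exact ⟨B, (norm_nonneg _).trans (hB 0), hB⟩

theorem coeffc_nonneg (p : ℕ → ℕ) (i : ℕ) : 0 ≤ coeffc p i := by
  unfold coeffc; positivity

theorem coeffc_le (p : ℕ → ℕ) (d i : ℕ) (h : d ≤ i) :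
    coeffc p i * (2 * (p i : ℝ) + 1) ^ d ≤ (1 / 2) ^ i := by
  have hq : (1 : ℝ) ≤ 2 * (p i : ℝ) + 1 := by
    have : (0 : ℝ) ≤ p i := Nat.cast_nonneg _
    linarith
  have h1 : (2 : ℝ) ^ (-((i : ℤ) + 1)) ≤ (1 / 2) ^ i := by
    rw [zpow_neg, one_div, inv_pow, ← zpow_natCast]
    gcongr
    · norm_num
    · omega
  have h3 : (17 * (i : ℝ)) ^ (-(4 * (i : ℤ))) ≤ 1 := by
    rcases Nat.eq_zero_or_pos i with rfl | hi
    · simp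
    · have : (1 : ℝ) ≤ i := by exact_mod_cast hi
      exact zpow_le_one_of_nonpos₀ (by linarith) (by omega)
  have h2 : (2 * (p i : ℝ) + 1) ^ (-(i : ℤ)) * (2 * (p i : ℝ) + 1) ^ d ≤ 1 := by
    rw [zpow_neg, zpow_natCast, inv_mul_le_iff₀ (by positivity), mul_one]
    exact pow_le_pow_right₀ hq h
  unfold coeffc
  calc _ = (2 : ℝ) ^ (-((i : ℤ) + 1)) * ((2 * (p i : ℝ) + 1) ^ (-(i : ℤ)) *
        (2 * (p i : ℝ) + 1) ^ d) * ((17 * (i : ℝ)) ^ (-(4 * (i : ℤ)))) := by ring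
    _ ≤ (1 / 2) ^ i * 1 * 1 := by gcongr
    _ = _ := by ring

theorem coeffc_summable (p : ℕ → ℕ) (d : ℕ) :
    Summable fun i => coeffc p i * (2 * (p i : ℝ) + 1) ^ d := by
  refine Summable.of_norm_bounded_eventually_nat (g := fun i => (1 / 2 : ℝ) ^ i)
    (summable_geometric_of_lt_one (by norm_num) (by norm_num)) ?_
  filter_upwards [Filter.eventually_ge_atTop d] with i hi
  rw [Real.norm_of_nonneg (mul_nonneg (coeffc_nonneg p i) (by positivity))]
  exact coeffc_le p d i hi

theorem term_contDiff (p : ℕ → ℕ) (i : ℕ) :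
    ContDiff ℝ (⊤ : ℕ∞) fun x => coeffc p i * bump (x - 2 * (p i : ℝ)) :=
  contDiff_const.mul (bump_contDiff.comp (contDiff_id.sub contDiff_const))

theorem term_bound (p : ℕ → ℕ) (d m : ℕ) (B : ℝ) (hB0 : 0 ≤ B)
    (hB : ∀ x, ‖iteratedFDeriv ℝ m bump x‖ ≤ B) (i : ℕ) (x : ℝ) :
    |x| ^ d * ‖iteratedFDeriv ℝ m (fun x => coeffc p i * bump (x - 2 * (p i : ℝ))) x‖ ≤
      coeffc p i * (2 * (p i : ℝ) + 1) ^ d * B := by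
  have hc := coeffc_nonneg p i
  have e : iteratedFDeriv ℝ m (fun x => coeffc p i * bump (x - 2 * (p i : ℝ))) x =
      coeffc p i • iteratedFDeriv ℝ m bump (x - 2 * (p i : ℝ)) := by
    rw [← iteratedFDeriv_comp_sub]
    have hd : ContDiffAt ℝ m (fun x => bump (x - 2 * (p i : ℝ))) x :=
      ((bump_contDiff.comp (contDiff_id.sub contDiff_const)).of_le
        (by exact_mod_cast le_top)).contDiffAt
    exact iteratedFDeriv_const_smul_apply (a := coeffc p i) hd
  rw [e, norm_smul, Real.norm_of_nonneg hc]
  by_cases hx : iteratedFDeriv ℝ m bump (x - 2 * (p i : ℝ)) = 0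
  · rw [hx]; simp only [norm_zero, mul_zero]; positivity
  · have h1 := bump_tsupport (support_iteratedFDeriv_subset (𝕜 := ℝ) m hx)
    simp only [Metric.mem_closedBall, dist_zero_right, Real.norm_eq_abs] at h1
    have h2 : |x| ≤ 2 * (p i : ℝ) + 1 := by
      have : (0 : ℝ) ≤ p i := Nat.cast_nonneg _
      rw [abs_le] at *
      constructor <;> linarith
    calc _ = coeffc p i * |x| ^ d * ‖iteratedFDeriv ℝ m bump (x - 2 * (p i : ℝ))‖ := by ring
      _ ≤ _ := by gcongr; exact hB _

/-- The series defining `g` converges everywhere, `g` is smooth, and `g` is a Schwartz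
function: all quantities `|x|^d |g⁽ᵐ⁾(x)|` are bounded. -/
theorem gfun_schwartz (p : ℕ → ℕ) :
    (∀ x : ℝ, Summable fun i : ℕ => coeffc p i * bump (x - 2 * (p i : ℝ))) ∧
      ContDiff ℝ (⊤ : ℕ∞) (gfun p) ∧
      ∀ d m : ℕ, ∃ C : ℝ, ∀ x : ℝ, |x| ^ d * |iteratedDeriv m (gfun p) x| ≤ C := by
  choose B hB0 hB using bump_bound
  have hs : ∀ k : ℕ, ((k : ℕ∞) ≤ (⊤ : ℕ∞)) →
      Summable fun i => coeffc p i * (2 * (p i : ℝ) + 1) ^ 0 * B k :=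
    fun k _ => (coeffc_summable p 0).mul_right _
  have hb : ∀ (k i : ℕ) (x : ℝ), ((k : ℕ∞) ≤ (⊤ : ℕ∞)) →
      ‖iteratedFDeriv ℝ k (fun x => coeffc p i * bump (x - 2 * (p i : ℝ))) x‖ ≤
        coeffc p i * (2 * (p i : ℝ) + 1) ^ 0 * B k := by
    intro k i x _
    have := term_bound p 0 k (B k) (hB0 k) (hB k) i x
    rwa [pow_zero, one_mul] at this
  refine ⟨?_, contDiff_tsum (term_contDiff p) hs hb, ?_⟩
  · intro x
    refine Summable.of_norm_bounded (hs 0 le_top) fun i => ?_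
    have := hb 0 i x le_top
    rwa [norm_iteratedFDeriv_zero] at this
  · intro d m
    refine ⟨∑' i, coeffc p i * (2 * (p i : ℝ) + 1) ^ d * B m, fun x => ?_⟩
    have e : iteratedFDeriv ℝ m (gfun p) x = ∑' i,
        iteratedFDeriv ℝ m (fun x => coeffc p i * bump (x - 2 * (p i : ℝ))) x :=
      iteratedFDeriv_tsum_apply (term_contDiff p) hs hb le_top x
    rw [← Real.norm_eq_abs (iteratedDeriv m (gfun p) x),
      ← norm_iteratedFDeriv_eq_norm_iteratedDeriv, e]
    have : |x| ^ d = ‖|x| ^ d‖ := by simp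
    rw [this, ← norm_smul, ← tsum_const_smul'']
    refine tsum_of_norm_bounded ((coeffc_summable p d).mul_right (B m)).hasSum fun i => ?_
    rw [norm_smul, ← this]
    exact term_bound p d m (B m) (hB0 m) (hB m) i x
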